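/- There is an absolute constant c such that for every m ≥ 1 and every m×m complex matrix A with zero trace, there exist m×m matrices B and C with A = BC - CB, B normal, and ‖B‖·‖C‖₂ ≤ (c + log m)^{1/2}·‖A‖₂. -/

import Mathlib

noncomputable def opNorm {m : ℕ} (A : Matrix (Fin m) (Fin m) ℂ) : ℝ :=
  ‖Matrix.toEuclideanCLM (𝕜 := ℂ) (n := Fin m) A‖

noncomputable def frobNorm {m : ℕ} (A : Matrix (Fin m) (Fin m) ℂ) : ℝ :=
  Real.sqrt (∑ i, ∑ j, ‖A i j‖ ^ 2)

lemma arctan_step {y : ℝ} (hy : 0 < y) (x : ℕ) :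
    1 / (((x:ℝ) + 1)^2 + y^2) ≤ (Real.arctan (((x:ℝ)+1)/y) - Real.arctan ((x:ℝ)/y)) / y := by
  have hab : (x:ℝ)/y < ((x:ℝ)+1)/y := by gcongr; linarith
  obtain ⟨c, hc, h⟩ := exists_hasDerivAt_eq_slope Real.arctan (fun t => 1 / (1 + t^2)) hab
    Real.continuous_arctan.continuousOn (fun t _ => Real.hasDerivAt_arctan t)
  have h1 : ((x:ℝ)+1)/y - (x:ℝ)/y = 1 / y := by ring
  rw [h1] at h
  have h2 : Real.arctan (((x:ℝ)+1)/y) - Real.arctan ((x:ℝ)/y) = (1/y) * (1 / (1 + c^2)) := by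
    rw [h]; field_simp
  rw [h2]
  have hc0 : 0 ≤ c := le_trans (by positivity) hc.1.le
  have h3 : c * y ≤ x + 1 := by
    have := hc.2.le
    rwa [le_div_iff₀ hy] at this
  have h4 : 1 / y * (1 / (1 + c ^ 2)) / y = 1 / (y^2 + (c*y)^2) := by
    field_simp
  rw [h4]
  apply one_div_le_one_div_of_le (by positivity)
  have : (c*y)^2 ≤ ((x:ℝ)+1)^2 := by gcongr
  linarith

lemma row_sum {y : ℝ} (hy : 0 < y) (N : ℕ) :
    ∑ x ∈ Finset.range N, 1 / (((x:ℝ) + 1)^2 + y^2) ≤ Real.pi / 2 / y := by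
  have h : ∑ x ∈ Finset.range N, 1 / (((x:ℝ) + 1)^2 + y^2) ≤ Real.arctan ((N:ℝ)/y) / y := by
    induction N with
    | zero => simp
    | succ n ih =>
      rw [Finset.sum_range_succ]
      have := arctan_step hy n
      push_cast
      rw [sub_div] at this
      linarith
  refine h.trans ?_
  gcongr
  exact (Real.arctan_lt_pi_div_two _).le

lemma sq_sum (N : ℕ) : ∑ x ∈ Finset.range N, 1 / ((x:ℝ) + 1)^2 ≤ 2 := by
  have h : ∑ x ∈ Finset.range (N+1), 1 / ((x:ℝ) + 1)^2 ≤ 2 - 1 / ((N:ℝ)+1) := by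
    induction N with
    | zero => norm_num
    | succ n ih =>
      rw [Finset.sum_range_succ]
      push_cast
      have : 1 / ((n:ℝ) + 1 + 1)^2 ≤ 1 / ((n:ℝ)+1) - 1 / ((n:ℝ) + 1 + 1) := by
        rw [div_sub_div _ _ (by positivity) (by positivity)]
        rw [div_le_div_iff₀ (by positivity) (by positivity)]
        have : (0:ℝ) ≤ n := by positivity
        nlinarith
      linarith
  rw [Finset.sum_range_succ] at h
  have h1 : 0 ≤ 1 / ((N:ℝ)+1) := by positivity
  have h2 : 0 ≤ 1 / ((N:ℝ)+1)^2 := by positivity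
  linarith

lemma sum_Icc_sym (F : ℤ → ℝ) (N : ℕ) :
    ∑ x ∈ Finset.Icc (-(N:ℤ)) N, F x
      = F 0 + ∑ k ∈ Finset.range N, (F ((k:ℤ)+1) + F (-((k:ℤ)+1))) := by
  induction N with
  | zero => simp
  | succ n ih =>
    have : Finset.Icc (-((n+1:ℕ):ℤ)) ((n+1:ℕ):ℤ)
        = insert ((n:ℤ)+1) (insert (-((n:ℤ)+1)) (Finset.Icc (-(n:ℤ)) n)) := by
      ext z; simp only [Finset.mem_Icc, Finset.mem_insert]; push_cast; omega
    rw [this, Finset.sum_insert, Finset.sum_insert, ih, Finset.sum_range_succ]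
    · ring
    · simp only [Finset.mem_Icc]; omega
    · simp only [Finset.mem_Icc, Finset.mem_insert]; omega

lemma lattice_sum (N : ℕ) :
    ∑ y ∈ Finset.Icc (-(N:ℤ)) N, ∑ x ∈ Finset.Icc (-(N:ℤ)) N, 1 / ((x:ℝ)^2 + (y:ℝ)^2)
      ≤ 8 + 2 * Real.pi + 2 * Real.pi * Real.log N := by
  have hrow : ∀ k : ℕ, ∀ y : ℝ, y^2 = ((k:ℝ)+1)^2 →
      ∑ x ∈ Finset.Icc (-(N:ℤ)) N, 1 / ((x:ℝ)^2 + y^2)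
        ≤ 1 / ((k:ℝ)+1)^2 + Real.pi * (1 / ((k:ℝ) + 1)) := by
    intro k y hy
    rw [sum_Icc_sym, hy]
    have := row_sum (y := (k:ℝ)+1) (by positivity) N
    push_cast
    simp only [neg_sq, ← two_mul, ← Finset.mul_sum]
    have e : Real.pi / 2 / ((k:ℝ)+1) = Real.pi * (1 / ((k:ℝ) + 1)) / 2 := by ring
    rw [e] at this
    have e2 : 1 / ((0:ℝ)^2 + ((k:ℝ)+1)^2) = 1 / ((k:ℝ)+1)^2 := by simp
    rw [e2]
    linarith
  have h0 : ∑ x ∈ Finset.Icc (-(N:ℤ)) N, 1 / ((x:ℝ)^2 + ((0:ℤ):ℝ)^2) ≤ 4 := by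
    rw [sum_Icc_sym]
    have := sq_sum N
    push_cast
    simp only [neg_sq, ← two_mul, ← Finset.mul_sum]
    have e : ∀ t : ℝ, t + (0:ℝ)^2 = t := fun t => by ring
    simp only [e]
    norm_num at this ⊢
    linarith
  rw [sum_Icc_sym]
  have hs : ∑ k ∈ Finset.range N, (∑ x ∈ Finset.Icc (-(N:ℤ)) N, 1 / ((x:ℝ)^2 + (((k:ℤ)+1 : ℤ):ℝ)^2)
      + ∑ x ∈ Finset.Icc (-(N:ℤ)) N, 1 / ((x:ℝ)^2 + ((-((k:ℤ)+1) : ℤ):ℝ)^2))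
      ≤ ∑ k ∈ Finset.range N, (2 * (1 / ((k:ℝ)+1)^2) + 2 * Real.pi * (1 / ((k:ℝ) + 1))) := by
    apply Finset.sum_le_sum
    intro k _
    have h1 := hrow k (((k:ℤ)+1 : ℤ):ℝ) (by push_cast; ring)
    have h2 := hrow k ((-((k:ℤ)+1) : ℤ):ℝ) (by push_cast; ring)
    linarith
  have hr : ∑ k ∈ Finset.range N, (2 * (1 / ((k:ℝ)+1)^2) + 2 * Real.pi * (1 / ((k:ℝ) + 1)))
      = 2 * ∑ k ∈ Finset.range N, (1 / ((k:ℝ)+1)^2)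
        + 2 * Real.pi * ∑ k ∈ Finset.range N, (1 / ((k:ℝ) + 1)) := by
    rw [Finset.sum_add_distrib, Finset.mul_sum, Finset.mul_sum]
  rw [hr] at hs
  have h1 := sq_sum N
  have h2 : ∑ k ∈ Finset.range N, (1 / ((k:ℝ) + 1)) ≤ 1 + Real.log N := by
    have := harmonic_le_one_add_log N
    rw [harmonic] at this
    push_cast at this
    simpa using this
  have h3 : 2 * Real.pi * ∑ k ∈ Finset.range N, (1 / ((k:ℝ) + 1)) ≤ 2 * Real.pi * (1 + Real.log N) := by
    have := Real.pi_pos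
    gcongr
  linarith

open MeasureTheory in
lemma lattice_count {R : ℝ} (hR : 1 ≤ R) (N : ℕ) (hN : R ≤ N) :
    Real.pi * (R - 1)^2 ≤ (((Finset.Icc (-(N:ℤ)) N ×ˢ Finset.Icc (-(N:ℤ)) N).filter
      (fun p : ℤ × ℤ => (p.1:ℝ)^2 + (p.2:ℝ)^2 ≤ R^2)).card : ℝ) := by
  set S := (Finset.Icc (-(N:ℤ)) N ×ˢ Finset.Icc (-(N:ℤ)) N).filter
      (fun p : ℤ × ℤ => (p.1:ℝ)^2 + (p.2:ℝ)^2 ≤ R^2) with hS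
  let sq : ℤ × ℤ → Set ℂ := fun p => Complex.measurableEquivRealProd ⁻¹'
    (Set.Icc ((p.1:ℝ) - 1/2) ((p.1:ℝ) + 1/2) ×ˢ Set.Icc ((p.2:ℝ) - 1/2) ((p.2:ℝ) + 1/2))
  have hvol : ∀ p, volume (sq p) = 1 := by
    intro p
    rw [Complex.volume_preserving_equiv_real_prod.measure_preimage
      (measurableSet_Icc.prod measurableSet_Icc).nullMeasurableSet]
    rw [Measure.volume_eq_prod, Measure.prod_prod, Real.volume_Icc, Real.volume_Icc]
    norm_num
  have hcov : Metric.ball (0:ℂ) (R - 1) ⊆ ⋃ p ∈ S, sq p := by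
    intro z hz
    rw [mem_ball_zero_iff] at hz
    have h1 := abs_le.1 (abs_sub_round z.re)
    have h2 := abs_le.1 (abs_sub_round z.im)
    have hp : ((round z.re : ℤ):ℝ)^2 + ((round z.im : ℤ):ℝ)^2 ≤ R^2 := by
      let w : ℂ := ⟨(round z.re : ℤ), (round z.im : ℤ)⟩
      have hw : ‖w - z‖ ≤ 1 := by
        have : ‖w - z‖^2 ≤ 1 := by
          rw [Complex.sq_norm, Complex.normSq_apply]
          simp only [Complex.sub_re, Complex.sub_im, w]
          nlinarith
        nlinarith [norm_nonneg (w - z)]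
      have hw2 : ‖w‖ ≤ R := by
        have : ‖w‖ ≤ ‖w - z‖ + ‖z‖ := by
          simpa using norm_add_le (w - z) z
        linarith
      have : ‖w‖^2 ≤ R^2 := by gcongr
      rw [Complex.sq_norm, Complex.normSq_apply] at this
      simp only [w] at this
      nlinarith
    have hb : ∀ a b : ℤ, (a:ℝ)^2 + (b:ℝ)^2 ≤ R^2 → -(N:ℤ) ≤ a ∧ a ≤ N := by
      intro a b hab
      have : |(a:ℝ)| ≤ N := by
        refine le_trans (abs_le_of_sq_le_sq ?_ (by linarith) ) hN
        nlinarith [sq_nonneg (b:ℝ)]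
      rw [abs_le] at this
      exact ⟨by exact_mod_cast this.1, by exact_mod_cast this.2⟩
    simp only [Set.mem_iUnion]
    refine ⟨(round z.re, round z.im), ?_, ?_⟩
    · simp only [hS, Finset.mem_filter, Finset.mem_product, Finset.mem_Icc]
      exact ⟨⟨hb _ _ hp, hb _ _ (by rw [add_comm]; exact hp)⟩, hp⟩
    · simp only [sq, Set.mem_preimage, Set.mem_prod, Set.mem_Icc, Complex.measurableEquivRealProd_apply]
      refine ⟨⟨?_, ?_⟩, ?_, ?_⟩ <;> linarith
  have h := (measure_mono hcov).trans (measure_biUnion_finset_le (μ := volume) S sq)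
  simp only [hvol, Finset.sum_const, nsmul_eq_mul, mul_one] at h
  rw [Complex.volume_ball] at h
  have h' := ENNReal.toReal_mono (by simp) h
  rw [ENNReal.toReal_mul, ENNReal.toReal_pow, ENNReal.toReal_ofReal (by linarith)] at h'
  simp at h'
  linarith

lemma perm_average {m : ℕ} (hm : 2 ≤ m) (g : Fin m → Fin m → ℝ) (a : Fin m → Fin m → ℝ) 
    (ha : ∀ i, a i i = 0) (G : ℝ) (hG : ∀ k, ∑ l ∈ Finset.univ.erase k, g k l ≤ G)
    (ha0 : ∀ i j, 0 ≤ a i j) :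
    ∃ σ : Equiv.Perm (Fin m), (m - 1) * ∑ i, ∑ j, a i j * g (σ i) (σ j) ≤ G * ∑ i, ∑ j, a i j := by
  classical
  let S : Fin m → Fin m → ℝ := fun i j => ∑ σ : Equiv.Perm (Fin m), g (σ i) (σ j)
  have hinv : ∀ (τ : Equiv.Perm (Fin m)) i j, S (τ i) (τ j) = S i j := by
    intro τ i j
    simp only [S]
    exact Fintype.sum_equiv (Equiv.mulRight τ) _ _ (fun σ => by simp)
  have htrans : ∀ i j k l : Fin m, i ≠ j → k ≠ l → S i j = S k l := by
    intro i j k l hij hkl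
    have h1 : S i j = S k (Equiv.swap i k j) := by
      rw [← hinv (Equiv.swap i k) i j]; simp
    rw [h1]
    set j' := Equiv.swap i k j
    have hj' : j' ≠ k := by
      intro h
      have : Equiv.swap i k j = Equiv.swap i k i := by rw [Equiv.swap_apply_left]; exact h
      exact hij ((Equiv.swap i k).injective this).symm
    rw [← hinv (Equiv.swap j' l) k j']
    rw [Equiv.swap_apply_left, Equiv.swap_apply_of_ne_of_ne hj'.symm hkl]
  have hS : ∀ i j, i ≠ j → (m - 1) * S i j ≤ (Fintype.card (Equiv.Perm (Fin m))) * G := by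
    intro i j hij
    have : ∑ l ∈ Finset.univ.erase i, S i l = (m - 1) * S i j := by
      rw [Finset.sum_congr rfl (fun l hl => htrans i l i j (Finset.ne_of_mem_erase hl).symm hij)]
      rw [Finset.sum_const, Finset.card_erase_of_mem (Finset.mem_univ _), Finset.card_univ,
        Fintype.card_fin, nsmul_eq_mul, Nat.cast_sub (by omega)]
      simp
    rw [← this]
    simp only [S]
    rw [Finset.sum_comm, ← nsmul_eq_mul, ← Finset.card_univ, ← Finset.sum_const]
    apply Finset.sum_le_sum
    intro σ _
    refine le_trans (le_of_eq ?_) (hG (σ i))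
    refine Finset.sum_bij (fun l _ => σ l) ?_ ?_ ?_ ?_
    · intro l hl; simpa using hl
    · intro a _ b _ h; exact σ.injective h
    · intro b hb; exact ⟨σ.symm b, by simp at hb ⊢; intro h; apply hb; rw [← h]; simp, by simp⟩
    · intros; rfl
  by_contra hcon
  push Not at hcon
  have hlt := Finset.sum_lt_sum_of_nonempty (s := (Finset.univ : Finset (Equiv.Perm (Fin m)))) 
    Finset.univ_nonempty (fun σ _ => hcon σ)
  rw [Finset.sum_const, Finset.card_univ, ← Finset.mul_sum] at hlt
  have hsw : ∑ σ : Equiv.Perm (Fin m), ∑ i, ∑ j, a i j * g (σ i) (σ j)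
      = ∑ i, ∑ j, a i j * S i j := by
    rw [Finset.sum_comm]
    refine Finset.sum_congr rfl fun i _ => ?_
    rw [Finset.sum_comm]
    refine Finset.sum_congr rfl fun j _ => ?_
    rw [Finset.mul_sum]
  rw [hsw, nsmul_eq_mul] at hlt
  apply absurd hlt
  rw [not_lt, ← mul_assoc]
  simp only [Finset.mul_sum]
  apply Finset.sum_le_sum
  intro i _
  apply Finset.sum_le_sum
  intro j _
  by_cases hij : i = j
  · subst hij; simp [ha]
  · have := mul_le_mul_of_nonneg_left (hS i j hij) (ha0 i j)
    linarith

/-- A trace zero operator has a unit vector with zero quadratic form. -/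
lemma exists_unit_zero {E : Type*} [NormedAddCommGroup E] [InnerProductSpace ℂ E]
    [FiniteDimensional ℂ E] {n : ℕ} (hn : Module.finrank ℂ E = n) (hpos : 0 < n)
    (T : E →ₗ[ℂ] E) (hT : LinearMap.trace ℂ E T = 0) :
    ∃ v : E, ‖v‖ = 1 ∧ inner ℂ v (T v) = 0 := by
  suffices h : ∃ v : E, v ≠ 0 ∧ inner ℂ v (T v) = 0 by
    obtain ⟨v, hv, h⟩ := h
    refine ⟨((‖v‖⁻¹ : ℝ) : ℂ) • v, ?_, ?_⟩
    · rw [norm_smul]; simp [hv]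
    · rw [map_smul, inner_smul_left, inner_smul_right, h]; simp
  have hsym : (T + LinearMap.adjoint T).IsSymmetric := by
    intro x y
    simp [inner_add_left, inner_add_right, LinearMap.adjoint_inner_left, 
      LinearMap.adjoint_inner_right, add_comm]
  let e := hsym.eigenvectorBasis hn
  let v : ℝ → E := fun θ => ∑ j : Fin n, Complex.exp (θ * j * Complex.I) • e j
  have hform : ∀ (L : E →ₗ[ℂ] E) θ, inner ℂ (v θ) (L (v θ)) =
      ∑ j : Fin n, ∑ l : Fin n, Complex.exp (θ * ((l:ℕ) - (j:ℕ) : ℂ) * Complex.I) * inner ℂ (e j) (L (e l)) := by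
    intro L θ
    simp only [v, map_sum, map_smul, sum_inner, inner_sum, inner_smul_left, inner_smul_right]
    simp only [Finset.mul_sum]
    rw [Finset.sum_comm]
    refine Finset.sum_congr rfl fun j _ => Finset.sum_congr rfl fun l _ => ?_
    rw [← mul_assoc]
    congr 1
    rw [← Complex.exp_conj, ← Complex.exp_add]
    congr 1
    simp
    ring
  have hre : ∀ θ, (inner ℂ (v θ) (T (v θ))).re = 0 := by
    intro θ
    have h1 : inner ℂ (v θ) ((T + LinearMap.adjoint T) (v θ)) = 0 := by
      have h2 : LinearMap.trace ℂ E (T + LinearMap.adjoint T) = 0 := by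
        rw [map_add, hT, zero_add, LinearMap.trace_eq_sum_inner _ e]
        rw [LinearMap.trace_eq_sum_inner _ e] at hT
        have := congrArg (starRingEnd ℂ) hT
        rw [map_sum, map_zero] at this
        rw [← this]
        refine Finset.sum_congr rfl fun j _ => ?_
        rw [LinearMap.adjoint_inner_right, inner_conj_symm]
      rw [hform]
      rw [LinearMap.trace_eq_sum_inner _ e] at h2
      rw [← h2]
      refine Finset.sum_congr rfl fun j _ => ?_
      rw [Finset.sum_eq_single j]
      · rw [sub_self, mul_zero, zero_mul, Complex.exp_zero, one_mul]
      · intro l _ hl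
        have : (T + LinearMap.adjoint T) (e l) = (hsym.eigenvalues hn l : ℂ) • e l :=
          hsym.apply_eigenvectorBasis hn l
        rw [this, inner_smul_right, e.orthonormal.2 hl.symm]
        simp
      · simp
    rw [LinearMap.add_apply, inner_add_right, LinearMap.adjoint_inner_right,
      ← inner_conj_symm (T (v θ))] at h1
    have := congrArg Complex.re h1
    simp only [Complex.add_re, Complex.conj_re, Complex.zero_re] at this
    linarith
  have hcont : Continuous fun θ => (inner ℂ (v θ) (T (v θ))).im := by
    have : (fun θ => (inner ℂ (v θ) (T (v θ))).im) = fun θ : ℝ => 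
      (∑ j : Fin n, ∑ l : Fin n, Complex.exp (θ * ((l:ℕ) - (j:ℕ) : ℂ) * Complex.I) * inner ℂ (e j) (T (e l))).im := by
      funext θ; rw [hform]
    rw [this]
    fun_prop
  have hn0 : (n:ℂ) ≠ 0 := by exact_mod_cast hpos.ne'
  have hsum : ∑ k ∈ Finset.range n, inner ℂ (v (2 * Real.pi * k / n)) (T (v (2 * Real.pi * k / n))) = 0 := by
    simp only [hform]
    rw [Finset.sum_comm]
    rw [LinearMap.trace_eq_sum_inner _ e] at hT
    have : (0:ℂ) = ∑ j, n * inner ℂ (e j) (T (e j)) := by rw [← Finset.mul_sum, hT, mul_zero]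
    rw [this]
    refine Finset.sum_congr rfl fun j _ => ?_
    rw [Finset.sum_comm, Finset.sum_eq_single j]
    · simp
    · intro l _ hl
      rw [← Finset.sum_mul]
      convert zero_mul _
      set w := Complex.exp (2 * Real.pi * (((l:ℕ) - (j:ℕ) : ℂ)) / n * Complex.I) with hw
      have hk : ∀ k : ℕ, Complex.exp (((2 * Real.pi * k / n : ℝ):ℂ) * ((l:ℕ) - (j:ℕ) : ℂ) * Complex.I) = w ^ k := by
        intro k
        rw [hw, ← Complex.exp_nat_mul]
        congr 1
        push_cast
        ring
      simp only [hk]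
      have hw1 : w ≠ 1 := by
        intro h
        rw [hw, Complex.exp_eq_one_iff] at h
        obtain ⟨q, hq⟩ := h
        have hpi : (Real.pi:ℂ) ≠ 0 := by exact_mod_cast Real.pi_ne_zero
        have h2 : (((l:ℕ):ℤ) - ((j:ℕ):ℤ) : ℤ) = q * n := by
          have : (((l:ℕ) - (j:ℕ) : ℂ)) = q * n := by
            field_simp at hq
            have := Complex.I_ne_zero
            linear_combination hq
          exact_mod_cast this
        have hl' := l.2
        have hj' := j.2
        have hq0 : q = 0 := by
          by_contra hq0
          rcases lt_or_gt_of_ne hq0 with h | h <;> nlinarith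
        apply hl
        ext
        rw [hq0] at h2
        omega
      have hwn : w ^ n = 1 := by
        rw [hw, ← Complex.exp_nat_mul, Complex.exp_eq_one_iff]
        refine ⟨((l:ℕ):ℤ) - ((j:ℕ):ℤ), ?_⟩
        push_cast
        field_simp
      have := mul_geom_sum w n
      rw [hwn, sub_self] at this
      exact (mul_eq_zero.1 this).resolve_left (sub_ne_zero.2 hw1)
    · simp
  have hsum' := congrArg Complex.im hsum
  rw [Complex.im_sum, Complex.zero_im] at hsum'
  have hne : (Finset.range n).Nonempty := ⟨0, by simpa using hpos⟩
  have hle : ∃ θ, (inner ℂ (v θ) (T (v θ))).im ≤ 0 := by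
    by_contra hcon
    push Not at hcon
    have := Finset.sum_pos (s := Finset.range n) (fun k _ => hcon (2 * Real.pi * k / n)) hne
    linarith
  have hge : ∃ θ, 0 ≤ (inner ℂ (v θ) (T (v θ))).im := by
    by_contra hcon
    push Not at hcon
    have := Finset.sum_neg (s := Finset.range n) (fun k _ => hcon (2 * Real.pi * k / n)) hne
    linarith
  obtain ⟨θ, hθ⟩ := mem_range_of_exists_le_of_exists_ge hcont hle hge
  refine ⟨v θ, ?_, Complex.ext (hre θ) hθ⟩
  intro h0
  have h1 := hform LinearMap.id θ
  have h2 : inner ℂ (e ⟨0, hpos⟩) (v θ) = 1 := by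
    simp only [v, inner_sum, inner_smul_right]
    rw [Finset.sum_eq_single ⟨0, hpos⟩]
    · rw [orthonormal_iff_ite.1 e.orthonormal]; simp
    · intro l _ hl
      rw [e.orthonormal.2 hl.symm, mul_zero]
    · simp
  rw [h0] at h2
  simp at h2

lemma exists_onb_cons {E : Type*} [NormedAddCommGroup E] [InnerProductSpace ℂ E]
    [FiniteDimensional ℂ E] {n : ℕ} (hn : Module.finrank ℂ E = n + 1) (v : E) (hv : ‖v‖ = 1)
    (c : OrthonormalBasis (Fin n) ℂ (ℂ ∙ v)ᗮ) :
    ∃ b : OrthonormalBasis (Fin (n+1)) ℂ E, b 0 = v ∧ ∀ i : Fin n, b i.succ = c i := by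
  have ho : Orthonormal ℂ (Fin.cons v (fun i => (c i : E)) : Fin (n+1) → E) := by
    have hperp : ∀ i, inner ℂ v (c i : E) = 0 := fun i =>
      Submodule.mem_orthogonal_singleton_iff_inner_right.1 (c i).2
    constructor
    · intro i
      refine Fin.cases ?_ (fun i => ?_) i
      · simpa using hv
      · exact c.orthonormal.1 i
    · intro i j
      refine Fin.cases ?_ (fun i => ?_) i <;> refine Fin.cases ?_ (fun j => ?_) j
      · simp
      · intro _; simpa using hperp j
      · intro _; simpa using inner_eq_zero_symm.1 (hperp i)
      · intro hij
        have := c.orthonormal.2 (i := i) (j := j) (fun h => hij (by rw [h]))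
        simpa using this
  let b := basisOfOrthonormalOfCardEqFinrank ho (by simp [hn])
  have hb : ⇑b = _ := coe_basisOfOrthonormalOfCardEqFinrank ho (by simp [hn])
  refine ⟨b.toOrthonormalBasis (by rw [hb]; exact ho), ?_, ?_⟩
  · simp [hb]
  · intro i; simp [hb]

universe u
lemma exists_zero_diag (n : ℕ) : ∀ (E : Type u) [NormedAddCommGroup E] [InnerProductSpace ℂ E]
    [FiniteDimensional ℂ E] (_ : Module.finrank ℂ E = n) (T : E →ₗ[ℂ] E)
    (_ : LinearMap.trace ℂ E T = 0),
    ∃ b : OrthonormalBasis (Fin n) ℂ E, ∀ i, inner ℂ (b i) (T (b i)) = 0 := by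
  induction n with
  | zero =>
    intro E _ _ _ hn T hT
    exact ⟨(stdOrthonormalBasis ℂ E).reindex (finCongr hn), fun i => i.elim0⟩
  | succ n ih =>
    intro E _ _ _ hn T hT
    obtain ⟨v, hv, hv0⟩ := exists_unit_zero hn (Nat.succ_pos n) T hT
    have hvne : v ≠ 0 := by intro h; simp [h] at hv
    have : Fact (Module.finrank ℂ E = n + 1) := ⟨hn⟩
    have hfr : Module.finrank ℂ (ℂ ∙ v)ᗮ = n := Submodule.finrank_orthogonal_span_singleton hvne
    let T' : (ℂ ∙ v)ᗮ →ₗ[ℂ] (ℂ ∙ v)ᗮ :=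
      ((ℂ ∙ v)ᗮ.orthogonalProjectionOnto : E →ₗ[ℂ] (ℂ ∙ v)ᗮ) ∘ₗ T ∘ₗ (ℂ ∙ v)ᗮ.subtype
    have hT' : ∀ x : (ℂ ∙ v)ᗮ, inner ℂ x (T' x) = inner ℂ (x:E) (T x) := by
      intro x
      simp [T']
    have htr : LinearMap.trace ℂ _ T' = 0 := by
      let c := (stdOrthonormalBasis ℂ (ℂ ∙ v)ᗮ).reindex (finCongr hfr)
      obtain ⟨b, hb0, hb⟩ := exists_onb_cons hn v hv c
      rw [LinearMap.trace_eq_sum_inner _ b, Fin.sum_univ_succ, hb0, hv0, zero_add] at hT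
      rw [LinearMap.trace_eq_sum_inner _ c, ← hT]
      simp only [hT', hb]
    obtain ⟨c, hc⟩ := ih (ℂ ∙ v)ᗮ hfr T' htr
    obtain ⟨b, hb0, hb⟩ := exists_onb_cons hn v hv c
    refine ⟨b, fun i => ?_⟩
    refine Fin.cases ?_ (fun i => ?_) i
    · rw [hb0, hv0]
    · rw [hb, ← hT', hc]

lemma points_exist (m : ℕ) (hm : 1 ≤ m) : ∃ b : Fin m → ℂ, Function.Injective b ∧
    (∀ i, ‖b i‖ ≤ 1) ∧
    ∀ k, ∑ l ∈ Finset.univ.erase k, 1 / ‖b k - b l‖^2 ≤ m * Real.log m + 260 * m := by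
  classical
  have hm1 : (1:ℝ) ≤ m := by exact_mod_cast hm
  set s : ℝ := Real.sqrt (m / Real.pi) with hs
  set t : ℝ := Real.sqrt m with ht
  have hpi := Real.pi_pos
  have hpi3 := Real.pi_gt_three
  have hpi4 : Real.pi < 3.15 := Real.pi_lt_d2
  have hs0 : 0 ≤ s := Real.sqrt_nonneg _
  have hs2 : s^2 = m / Real.pi := Real.sq_sqrt (by positivity)
  have ht2 : t^2 = m := Real.sq_sqrt (by positivity)
  have ht1 : 1 ≤ t := by rw [ht]; exact Real.one_le_sqrt.2 hm1
  have hst : s ≤ t := by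
    apply Real.sqrt_le_sqrt
    rw [div_le_iff₀ hpi]; nlinarith
  set R : ℝ := s + 1 with hR
  have hR1 : 1 ≤ R := by linarith
  set N : ℕ := ⌈R⌉₊ with hN
  have hRN : R ≤ N := Nat.le_ceil R
  have hNR : (N:ℝ) < R + 1 := Nat.ceil_lt_add_one (by linarith)
  have hcard := lattice_count hR1 N hRN
  set S := (Finset.Icc (-(N:ℤ)) N ×ˢ Finset.Icc (-(N:ℤ)) N).filter
      (fun p : ℤ × ℤ => (p.1:ℝ)^2 + (p.2:ℝ)^2 ≤ R^2) with hS
  have hmS : m ≤ S.card := by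
    have : Real.pi * (R - 1)^2 = m := by
      rw [hR, add_sub_cancel_right, hs2]; field_simp
    rw [this] at hcard
    exact_mod_cast hcard
  obtain ⟨S', hS'S, hS'⟩ := Finset.exists_subset_card_eq hmS
  let p : Fin m → ℤ × ℤ := fun i => ((S'.equivFinOfCardEq hS').symm i : ℤ × ℤ)
  have hpinj : Function.Injective p := fun i j h =>
    (S'.equivFinOfCardEq hS').symm.injective (Subtype.ext h)
  have hpS : ∀ i, p i ∈ S := fun i => hS'S ((S'.equivFinOfCardEq hS').symm i).2
  let z : ℤ × ℤ → ℂ := fun q => ⟨q.1, q.2⟩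
  have hznorm : ∀ q : ℤ × ℤ, ‖z q‖^2 = (q.1:ℝ)^2 + (q.2:ℝ)^2 := by
    intro q
    rw [Complex.sq_norm, Complex.normSq_apply]; simp only [z]; ring
  have hzinj : Function.Injective z := by
    intro q r h
    have h1 := congrArg Complex.re h
    have h2 := congrArg Complex.im h
    simp only [z] at h1 h2
    exact Prod.ext (by exact_mod_cast h1) (by exact_mod_cast h2)
  have hR0 : (R:ℂ) ≠ 0 := by exact_mod_cast (by linarith : R ≠ 0)
  have hRn : ‖(R:ℂ)‖ = R := by rw [Complex.norm_real, Real.norm_of_nonneg (by linarith)]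
  refine ⟨fun i => z (p i) / R, ?_, ?_, ?_⟩
  · intro i j h
    simp only at h
    exact hpinj (hzinj ((div_left_inj' hR0).1 h))
  · intro i
    have := hpS i
    simp only [hS, Finset.mem_filter] at this
    rw [norm_div, hRn, div_le_one (by linarith)]
    apply le_of_sq_le_sq _ (by linarith)
    rw [hznorm]; exact this.2
  · intro k
    have h1 : ∀ l, 1 / ‖z (p k) / R - z (p l) / R‖^2
        = R^2 * (1 / (((p k - p l).1 : ℝ)^2 + ((p k - p l).2 : ℝ)^2)) := by
      intro l
      rw [← hznorm, ← sub_div, norm_div, hRn]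
      have : z (p k) - z (p l) = z (p k - p l) := by
        apply Complex.ext <;> simp [z]
      rw [this, div_pow]
      field_simp
    simp only [h1]
    rw [← Finset.mul_sum]
    have h2 : ∑ l ∈ Finset.univ.erase k,
        (1 / (((p k - p l).1 : ℝ)^2 + ((p k - p l).2 : ℝ)^2))
        ≤ ∑ q ∈ Finset.Icc (-((2*N:ℕ):ℤ)) ((2*N:ℕ):ℤ) ×ˢ Finset.Icc (-((2*N:ℕ):ℤ)) ((2*N:ℕ):ℤ),
          1 / ((q.1:ℝ)^2 + (q.2:ℝ)^2) := by
      have hinj : Set.InjOn (fun l => p k - p l) (Finset.univ.erase k : Finset (Fin m)) := by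
        intro a _ b _ h
        simp only at h
        exact hpinj (sub_right_injective h)
      rw [← Finset.sum_image (f := fun q : ℤ × ℤ => 1 / ((q.1:ℝ)^2 + (q.2:ℝ)^2)) hinj]
      apply Finset.sum_le_sum_of_subset_of_nonneg
      · intro q hq
        rw [Finset.mem_image] at hq
        obtain ⟨l, _, rfl⟩ := hq
        have hk := hpS k
        have hl := hpS l
        simp only [hS, Finset.mem_filter, Finset.mem_product, Finset.mem_Icc] at hk hl
        simp only [Finset.mem_product, Finset.mem_Icc, Prod.fst_sub, Prod.snd_sub]
        push_cast
        omega
      · intros; positivity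
    rw [Finset.sum_product_right] at h2
    have h3 := h2.trans (lattice_sum (2*N))
    have hN0 : (0:ℝ) < N := by linarith
    have h4 : Real.log ((2*N:ℕ):ℝ) ≤ 5 + Real.log m / 2 := by
      have : Real.log ((2*N:ℕ):ℝ) ≤ Real.log (6 * t) := by
        apply Real.log_le_log
        · push_cast; linarith
        · push_cast; linarith
      rw [Real.log_mul (by norm_num) (by linarith), ht, Real.log_sqrt (by linarith)] at this
      have h6 := Real.log_le_sub_one_of_pos (x := 6) (by norm_num)
      linarith
    have hL0 : 0 ≤ Real.log m := Real.log_nonneg hm1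
    have h5 : ∑ l ∈ Finset.univ.erase k,
        (1 / (((p k - p l).1 : ℝ)^2 + ((p k - p l).2 : ℝ)^2)) ≤ 60 + Real.pi * Real.log m := by
      have : 2 * Real.pi * Real.log ((2*N:ℕ):ℝ) ≤ 2 * Real.pi * (5 + Real.log m / 2) := by gcongr
      nlinarith
    have h6 : Real.log m ≤ 2 * t := by
      have := Real.log_le_sub_one_of_pos (x := t) (by linarith)
      rw [ht, Real.log_sqrt (by linarith)] at this
      linarith
    have h7 : R^2 ≤ m / Real.pi + 3 * t := by rw [← hs2, hR]; nlinarith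
    have h8 : R^2 ≤ 4 * m := by rw [← ht2, hR]; nlinarith
    calc R^2 * _ ≤ R^2 * (60 + Real.pi * Real.log m) := by gcongr
      _ = 60 * R^2 + R^2 * (Real.pi * Real.log m) := by ring
      _ ≤ 60 * (4 * m) + (m / Real.pi + 3 * t) * (Real.pi * Real.log m) := by gcongr
      _ = 240 * m + m * Real.log m + 3 * Real.pi * (t * Real.log m) := by field_simp; ring
      _ ≤ 240 * m + m * Real.log m + 3 * Real.pi * (t * (2 * t)) := by gcongr
      _ = 240 * m + m * Real.log m + 6 * Real.pi * m := by rw [← ht2]; ring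
      _ ≤ m * Real.log m + 260 * m := by nlinarith

lemma frob_sq {m : ℕ} (A : Matrix (Fin m) (Fin m) ℂ) :
    ((∑ i, ∑ j, ‖A i j‖ ^ 2 : ℝ) : ℂ) = (star A * A).trace := by
  rw [Matrix.trace, Finset.sum_comm]
  push_cast
  refine Finset.sum_congr rfl fun j _ => ?_
  rw [Matrix.diag_apply, Matrix.mul_apply]
  refine Finset.sum_congr rfl fun i _ => ?_
  rw [Matrix.star_apply, ← Complex.conj_mul']
  rfl

lemma frob_conj {m : ℕ} (A U : Matrix (Fin m) (Fin m) ℂ) (h1 : star U * U = 1) :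
    ∑ i, ∑ j, ‖(U * A * star U) i j‖ ^ 2 = ∑ i, ∑ j, ‖A i j‖ ^ 2 := by
  have : ((∑ i, ∑ j, ‖(U * A * star U) i j‖ ^ 2 : ℝ) : ℂ) = ((∑ i, ∑ j, ‖A i j‖ ^ 2 : ℝ) : ℂ) := by
    rw [frob_sq, frob_sq]
    have e : star (U * A * star U) * (U * A * star U) = U * (star A * A * star U) := by
      simp only [star_mul, star_star]
      calc U * (star A * star U) * (U * A * star U)
          = U * star A * (star U * U) * A * star U := by noncomm_ring
        _ = _ := by rw [h1]; noncomm_ring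
    rw [e, Matrix.trace_mul_comm, mul_assoc, h1, mul_one]
  exact_mod_cast this

open scoped Matrix.Norms.L2Operator in
lemma opNorm_conj_le {m : ℕ} (d : Fin m → ℂ) (hd : ∀ i, ‖d i‖ ≤ 1)
    (U : Matrix (Fin m) (Fin m) ℂ) (h1 : star U * U = 1) (h2 : U * star U = 1) :
    opNorm (U * Matrix.diagonal d * star U) ≤ 1 := by
  have hU : U ∈ unitary (Matrix (Fin m) (Fin m) ℂ) := ⟨h1, h2⟩
  have : opNorm (U * Matrix.diagonal d * star U) = ‖U * Matrix.diagonal d * star U‖ := rfl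
  rw [this, CStarRing.norm_mul_mem_unitary _ (Unitary.star_mem hU), CStarRing.norm_mem_unitary_mul _ hU,
    Matrix.l2_opNorm_diagonal]
  exact (pi_norm_le_iff_of_nonneg zero_le_one).2 hd

lemma exists_unitary_zero_diag {m : ℕ} (A : Matrix (Fin m) (Fin m) ℂ) (hA : A.trace = 0) :
    ∃ U : Matrix (Fin m) (Fin m) ℂ, star U * U = 1 ∧ U * star U = 1 ∧
      ∀ i, (star U * A * U) i i = 0 := by
  let T := Matrix.toEuclideanLin A
  have hT : LinearMap.trace ℂ (EuclideanSpace ℂ (Fin m)) T = 0 := by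
    rw [LinearMap.trace_eq_sum_inner _ (EuclideanSpace.basisFun (Fin m) ℂ), ← hA, Matrix.trace]
    refine Finset.sum_congr rfl fun i _ => ?_
    rw [EuclideanSpace.basisFun_apply, EuclideanSpace.inner_single_left]
    simp [T, Matrix.toLpLin_apply]
  obtain ⟨b, hb⟩ := exists_zero_diag m (EuclideanSpace ℂ (Fin m)) (by simp) T hT
  have key : ∀ (M : Matrix (Fin m) (Fin m) ℂ) i j,
      (star (Matrix.of fun j i => b i j) * M * (Matrix.of fun j i => b i j)) i j
      = inner ℂ (b i) (Matrix.toEuclideanLin M (b j)) := by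
    intro M i j
    rw [mul_assoc, Matrix.mul_apply, PiLp.inner_apply]
    refine Finset.sum_congr rfl fun k _ => ?_
    simp [Matrix.mul_apply, Matrix.toEuclideanLin, Matrix.mulVec, dotProduct, mul_comm]
  have h1 : star (Matrix.of fun j i => b i j) * (Matrix.of fun j i => b i j : Matrix (Fin m) (Fin m) ℂ) = 1 := by
    ext i j
    have := key 1 i j
    rw [mul_one] at this
    rw [this, Matrix.one_apply]
    have e : Matrix.toEuclideanLin (1 : Matrix (Fin m) (Fin m) ℂ) (b j) = b j := by
      simp [Matrix.toEuclideanLin]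
    rw [e]
    exact orthonormal_iff_ite.1 b.orthonormal i j
  refine ⟨Matrix.of fun j i => b i j, h1, mul_eq_one_comm.1 h1, fun i => ?_⟩
  rw [key]
  exact hb i

/-- There is an absolute constant `c` such that every zero-trace `m×m` complex matrix `A`
is a commutator `A = BC - CB` with `B` normal and `‖B‖ ‖C‖₂ ≤ (c + log m)^{1/2} ‖A‖₂`. -/
theorem stmt7 :
    ∃ c : ℝ, ∀ (m : ℕ), 1 ≤ m → ∀ A : Matrix (Fin m) (Fin m) ℂ, A.trace = 0 →
      ∃ B C : Matrix (Fin m) (Fin m) ℂ,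
        A = B * C - C * B ∧ B * star B = star B * B ∧
          opNorm B * frobNorm C ≤ Real.sqrt (c + Real.log m) * frobNorm A := by
  refine ⟨521, fun m hm A hA => ?_⟩
  rcases Nat.lt_or_ge m 2 with hlt | hm2
  · obtain rfl : m = 1 := by omega
    have hA0 : A = 0 := by
      ext i j
      rw [Subsingleton.elim i 0, Subsingleton.elim j 0]
      simpa [Matrix.trace] using hA
    refine ⟨0, 0, by simp [hA0], by simp, ?_⟩
    simp [hA0, frobNorm]
  obtain ⟨U, hU1, hU2, hdiag⟩ := exists_unitary_zero_diag A hA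
  obtain ⟨b, hbinj, hb1, hbsum⟩ := points_exist m hm
  set A' := star U * A * U with hA'
  have hAA' : A = U * A' * star U := by
    rw [hA']
    calc A = (U * star U) * A * (U * star U) := by rw [hU2]; simp
      _ = _ := by noncomm_ring
  obtain ⟨σ, hσ⟩ := perm_average hm2 (fun k l => 1 / ‖b k - b l‖^2) (fun i j => ‖A' i j‖^2)
    (fun i => by simp [hdiag i]) _ hbsum (fun i j => by positivity)
  let d : Fin m → ℂ := fun i => b (σ i)
  let C' : Matrix (Fin m) (Fin m) ℂ := Matrix.of fun i j => A' i j / (d i - d j)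
  have hcomm : A' = Matrix.diagonal d * C' - C' * Matrix.diagonal d := by
    ext i j
    rw [Matrix.sub_apply, Matrix.diagonal_mul, Matrix.mul_diagonal]
    simp only [C', Matrix.of_apply]
    by_cases hij : i = j
    · subst hij; rw [hdiag]; simp
    · have : d i - d j ≠ 0 := sub_ne_zero.2 (fun h => hij (σ.injective (hbinj h)))
      field_simp
  refine ⟨U * Matrix.diagonal d * star U, U * C' * star U, ?_, ?_, ?_⟩
  · have e : ∀ X Y : Matrix (Fin m) (Fin m) ℂ,
        U * X * star U * (U * Y * star U) = U * (X * Y) * star U := by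
      intro X Y
      calc U * X * star U * (U * Y * star U) = U * X * (star U * U) * Y * star U := by noncomm_ring
        _ = _ := by rw [hU1]; noncomm_ring
    rw [e, e, ← sub_mul, ← mul_sub, ← hcomm]
    exact hAA'
  · have e : ∀ X Y : Matrix (Fin m) (Fin m) ℂ,
        U * X * star U * (U * Y * star U) = U * (X * Y) * star U := by
      intro X Y
      calc U * X * star U * (U * Y * star U) = U * X * (star U * U) * Y * star U := by noncomm_ring
        _ = _ := by rw [hU1]; noncomm_ring
    have hst : star (U * Matrix.diagonal d * star U) = U * Matrix.diagonal (star d) * star U := by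
      rw [star_mul, star_mul, star_star, Matrix.star_eq_conjTranspose (Matrix.diagonal d),
        Matrix.diagonal_conjTranspose, mul_assoc]
    rw [hst, e, e, Matrix.diagonal_mul_diagonal, Matrix.diagonal_mul_diagonal]
    simp only [mul_comm]
  · have hop := opNorm_conj_le d (fun i => hb1 (σ i)) U hU1 hU2
    have hf0 : 0 ≤ frobNorm (U * C' * star U) := Real.sqrt_nonneg _
    refine le_trans (mul_le_of_le_one_left hf0 hop) ?_
    have hL0 : 0 ≤ Real.log m := Real.log_nonneg (by exact_mod_cast hm)
    unfold frobNorm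
    rw [← Real.sqrt_mul (by linarith)]
    apply Real.sqrt_le_sqrt
    rw [frob_conj _ _ hU1]
    have hAf : ∑ i, ∑ j, ‖A i j‖^2 = ∑ i, ∑ j, ‖A' i j‖^2 := by
      conv_lhs => rw [hAA']
      exact frob_conj _ _ hU1
    rw [hAf]
    have hCf : ∑ i, ∑ j, ‖C' i j‖^2 = ∑ i, ∑ j, ‖A' i j‖^2 * (1 / ‖b (σ i) - b (σ j)‖^2) := by
      refine Finset.sum_congr rfl fun i _ => Finset.sum_congr rfl fun j _ => ?_
      simp only [C', d, Matrix.of_apply]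
      rw [norm_div, div_pow]; ring
    rw [hCf]
    have hm2' : (2:ℝ) ≤ m := by exact_mod_cast hm2
    have hlog := Real.log_le_sub_one_of_pos (x := (m:ℝ)) (by linarith)
    have hF0 : 0 ≤ ∑ i, ∑ j, ‖A' i j‖^2 := by positivity
    refine le_of_mul_le_mul_left (hσ.trans ?_) (by linarith : (0:ℝ) < m - 1)
    rw [← mul_assoc]
    apply mul_le_mul_of_nonneg_right _ hF0
    nlinarith
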